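/- arXiv:2211.07732 — 3 statements merged into one kernel-verified Lean document; each statement's English description precedes it below -/
import Mathlib

section
/- There exist a constant C > 0 and d₀ such that for every graph G on n vertices with average degree d ≥ d₀, there is a subgraph G₁ ⊆ G with average degree at most log d and a collection 𝒫 of at most C·n paths in G that strongly separates the set of edges of G that are not edges of G₁. -/
/-!
The edges of any graph on `n` vertices can be strongly separated by at most `33 n` paths, so
`G₁ = ⊥` is always a suitable choice.

The linear bound is proved by induction on the number of vertices. Take a longest path
`f 0, …, f n` and let `S` be the set of all ends obtained from `f 0` by Pósa rotations that fix
`f n`. By Pósa's lemma (`exists_posa`) every neighbour of `S` lies on the path, and `S` together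
with its neighbours occupies a set `I` of at most `3 |S|` positions. It suffices to find `O(|I|)`
paths separating each edge inside `f '' I` from every other edge: then the vertices of `S` can be
removed, and the induction hypothesis deals with the edges that avoid `S`.

The tool for that is the zigzag of `exists_zig`: if a family `K` of chords of a path is strictly
nested, there are two paths, one starting at each end, that traverse all chords of `K`, use
otherwise only edges of the given path, and have no edge of the given path in common. So the
edges common to both are exactly the chords of `K`. Writing `r` for the rank of a position in
`I`, the chords `(a, b)`, `a < b`, with `r a + r b` fixed are strictly nested, and so are those
with `2 * r a + r b` fixed. There are at most `5 |I|` such classes, hence at most `10 |I|`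
zigzags, and the two classes of a chord meet only in that chord. The edges of the path itself with
both ends in `f '' I` are treated as single-edge paths.
-/

/-! ### Zigzag paths through nested chords -/

/-- The walk `q` is a zigzag for the family `K` of chords of the path `f i, …, f j`: a path that
stays on the vertices `f i, …, f j`, traverses all chords in `K`, and otherwise uses only edges
of the path `f i, …, f j`. A chord is encoded as a pair of positions. -/
structure Zig {V : Type} (G : SimpleGraph V) (f : ℕ → V) (K : Set (ℕ × ℕ)) (i j : ℕ)
    {u w : V} (q : G.Walk u w) : Prop where
  isPath : q.IsPath
  supp : ∀ x ∈ q.support, ∃ k, i ≤ k ∧ k ≤ j ∧ x = f k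
  cover : ∀ p ∈ K, s(f p.1, f p.2) ∈ q.edges
  edges : ∀ e ∈ q.edges, (∃ p ∈ K, e = s(f p.1, f p.2)) ∨
    ∃ k, i ≤ k ∧ k < j ∧ e = s(f k, f (k + 1))

/-- Induction on the length of the path: an end that lies on no chord is cut off and reattached
to the zigzag starting on its side. If both ends lie on chords, nestedness forces the chord joining
them; each new zigzag crosses it first and continues with the inner zigzag starting on the far
side, so that the two use different end edges of the outer path. -/
theorem exists_zig {V : Type} (G : SimpleGraph V) (f : ℕ → V) (n : ℕ) :
    ∀ (i j : ℕ) (K : Set (ℕ × ℕ)), j = i + n →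
      (∀ a b, i ≤ a → a ≤ j → i ≤ b → b ≤ j → f a = f b → a = b) →
      (∀ k, i ≤ k → k < j → G.Adj (f k) (f (k + 1))) →
      (∀ p ∈ K, i ≤ p.1 ∧ p.1 + 2 ≤ p.2 ∧ p.2 ≤ j ∧ G.Adj (f p.1) (f p.2)) →
      (∀ p ∈ K, ∀ p' ∈ K, p ≠ p' →
        (p.1 < p'.1 ∧ p'.2 < p.2) ∨ (p'.1 < p.1 ∧ p.2 < p'.2)) →
      ∃ (w₁ w₂ : V) (q₁ : G.Walk (f i) w₁) (q₂ : G.Walk (f j) w₂),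
        Zig G f K i j q₁ ∧ Zig G f K i j q₂ ∧
        ∀ k, i ≤ k → k < j →
          ¬ (s(f k, f (k + 1)) ∈ q₁.edges ∧ s(f k, f (k + 1)) ∈ q₂.edges) := by
  induction n using Nat.strong_induction_on with
  | _ n ih =>
  intro i j K hj hinj hadj hK hnest
  rcases Nat.eq_zero_or_pos n with rfl | hn
  · obtain rfl : j = i := by omega
    have hKe : ∀ p ∈ K, False := fun p hp => by have := hK p hp; omega
    have hz : Zig G f K j j (SimpleGraph.Walk.nil : G.Walk (f j) (f j)) :=
      ⟨by simp, fun x hx => ⟨j, le_rfl, le_rfl, by simpa using hx⟩,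
        fun p hp => (hKe p hp).elim, by simp⟩
    exact ⟨_, _, .nil, .nil, hz, hz, by simp⟩
  by_cases hi : ∃ p ∈ K, p.1 = i
  swap
  · obtain ⟨w₁, w₂, q₁, q₂, h₁, h₂, hd⟩ := ih (n - 1) (by omega) (i + 1) j K (by omega)
      (fun a b ha ha' hb hb' => hinj a b (by omega) ha' (by omega) hb')
      (fun k hk hk' => hadj k (by omega) hk')
      (fun p hp => by
        have h := hK p hp
        have : p.1 ≠ i := fun h => hi ⟨p, hp, h⟩
        exact ⟨by omega, h.2.1, h.2.2⟩) hnest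
    have hni : ∀ k, i + 1 ≤ k → k ≤ j → f k ≠ f i := fun k hk hk' h => by
      have := hinj k i (by omega) hk' le_rfl (by omega) h
      omega
    have hfi : ∀ {u w : V} (q : G.Walk u w), Zig G f K (i + 1) j q → f i ∉ q.support := by
      intro u w q hq hs
      obtain ⟨k, hk, hk', h⟩ := hq.supp _ hs
      exact hni k hk hk' h.symm
    refine ⟨w₁, w₂, .cons (hadj i le_rfl (by omega)) q₁, q₂, ⟨?_, ?_, ?_, ?_⟩,
      ⟨h₂.isPath, ?_, h₂.cover, ?_⟩, ?_⟩
    · exact h₁.isPath.cons (hfi _ h₁)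
    · intro x hx
      rw [SimpleGraph.Walk.support_cons, List.mem_cons] at hx
      rcases hx with rfl | hx
      · exact ⟨i, le_rfl, by omega, rfl⟩
      · obtain ⟨k, hk, hk', h⟩ := h₁.supp x hx
        exact ⟨k, by omega, hk', h⟩
    · intro p hp
      simp [h₁.cover p hp]
    · intro e he
      rw [SimpleGraph.Walk.edges_cons, List.mem_cons] at he
      rcases he with rfl | he
      · exact .inr ⟨i, le_rfl, by omega, rfl⟩
      · rcases h₁.edges e he with h | ⟨k, hk, hk', h⟩
        · exact .inl h
        · exact .inr ⟨k, by omega, hk', h⟩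
    · intro x hx
      obtain ⟨k, hk, hk', h⟩ := h₂.supp x hx
      exact ⟨k, by omega, hk', h⟩
    · intro e he
      rcases h₂.edges e he with h | ⟨k, hk, hk', h⟩
      · exact .inl h
      · exact .inr ⟨k, by omega, hk', h⟩
    · rintro k hk hk' ⟨he₁, he₂⟩
      rcases Nat.eq_or_lt_of_le hk with rfl | hk
      · exact hfi _ h₂ (q₂.fst_mem_support_of_mem_edges he₂)
      · rw [SimpleGraph.Walk.edges_cons, List.mem_cons] at he₁
        rcases he₁ with he₁ | he₁
        · have : f i ∈ s(f k, f (k + 1)) := by rw [he₁]; simp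
          rw [Sym2.mem_iff] at this
          rcases this with h | h
          · exact hni k hk (by omega) h.symm
          · exact hni (k + 1) (by omega) (by omega) h.symm
        · exact hd k hk hk' ⟨he₁, he₂⟩
  obtain ⟨m, rfl⟩ : ∃ m, j = m + 1 := ⟨j - 1, by omega⟩
  by_cases hl : ∃ p ∈ K, p.2 = m + 1
  swap
  · obtain ⟨w₁, w₂, q₁, q₂, h₁, h₂, hd⟩ := ih (n - 1) (by omega) i m K (by omega)
      (fun a b ha ha' hb hb' => hinj a b ha (by omega) hb (by omega))
      (fun k hk hk' => hadj k hk (by omega))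
      (fun p hp => by
        have h := hK p hp
        have : p.2 ≠ m + 1 := fun h => hl ⟨p, hp, h⟩
        exact ⟨h.1, h.2.1, by omega, h.2.2.2⟩) hnest
    have hni : ∀ k, i ≤ k → k ≤ m → f k ≠ f (m + 1) := fun k hk hk' h => by
      have := hinj k (m + 1) hk (by omega) (by omega) le_rfl h
      omega
    have hfi : ∀ {u w : V} (q : G.Walk u w), Zig G f K i m q → f (m + 1) ∉ q.support := by
      intro u w q hq hs
      obtain ⟨k, hk, hk', h⟩ := hq.supp _ hs
      exact hni k hk hk' h.symm
    refine ⟨w₁, w₂, q₁, .cons (hadj m (by omega) (by omega)).symm q₂,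
      ⟨h₁.isPath, ?_, h₁.cover, ?_⟩, ⟨?_, ?_, ?_, ?_⟩, ?_⟩
    · intro x hx
      obtain ⟨k, hk, hk', h⟩ := h₁.supp x hx
      exact ⟨k, by omega, by omega, h⟩
    · intro e he
      rcases h₁.edges e he with h | ⟨k, hk, hk', h⟩
      · exact .inl h
      · exact .inr ⟨k, by omega, by omega, h⟩
    · exact h₂.isPath.cons (hfi _ h₂)
    · intro x hx
      rw [SimpleGraph.Walk.support_cons, List.mem_cons] at hx
      rcases hx with rfl | hx
      · exact ⟨m + 1, by omega, by omega, rfl⟩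
      · obtain ⟨k, hk, hk', h⟩ := h₂.supp x hx
        exact ⟨k, by omega, by omega, h⟩
    · intro p hp
      simp [h₂.cover p hp]
    · intro e he
      rw [SimpleGraph.Walk.edges_cons, List.mem_cons] at he
      rcases he with rfl | he
      · exact .inr ⟨m, by omega, by omega, Sym2.eq_swap⟩
      · rcases h₂.edges e he with h | ⟨k, hk, hk', h⟩
        · exact .inl h
        · exact .inr ⟨k, by omega, by omega, h⟩
    · rintro k hk hk' ⟨he₁, he₂⟩
      rcases Nat.eq_or_lt_of_le (Nat.le_of_lt_succ hk') with rfl | hk'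
      · exact hfi _ h₁ (q₁.snd_mem_support_of_mem_edges he₁)
      · rw [SimpleGraph.Walk.edges_cons, List.mem_cons] at he₂
        rcases he₂ with he₂ | he₂
        · have : f (m + 1) ∈ s(f k, f (k + 1)) := by rw [he₂]; simp
          rw [Sym2.mem_iff] at this
          rcases this with h | h
          · exact hni k hk (by omega) h.symm
          · exact hni (k + 1) (by omega) (by omega) h.symm
        · exact hd k hk hk' ⟨he₁, he₂⟩
  -- Both ends of the path lie on chords, and nestedness makes this a single chord.
  have hc : (i, m + 1) ∈ K := by
    obtain ⟨p, hp, hpi⟩ := hi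
    obtain ⟨p', hp', hpj⟩ := hl
    have h1 := hK p hp
    have h2 := hK p' hp'
    by_cases hpp : p = p'
    · subst hpp
      rw [← hpi, ← hpj]
      exact hp
    · have := hnest p hp p' hp' hpp
      omega
  obtain ⟨-, h2, -, hcadj⟩ := hK _ hc
  simp only at h2 hcadj
  obtain ⟨w₁, w₂, q₁, q₂, h₁, h₂, hd⟩ := ih (n - 2) (by omega) (i + 1) m (K \ {(i, m + 1)})
      (by omega)
      (fun a b ha ha' hb hb' => hinj a b (by omega) (by omega) (by omega) (by omega))
      (fun k hk hk' => hadj k (by omega) (by omega))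
      (fun p hp => by
        have h := hK p hp.1
        have := hnest p hp.1 _ hc hp.2
        simp only at this
        exact ⟨by omega, h.2.1, by omega, h.2.2.2⟩)
      (fun p hp p' hp' => hnest p hp.1 p' hp'.1)
  have hnot : ∀ {u w : V} (q : G.Walk u w) (k : ℕ), Zig G f (K \ {(i, m + 1)}) (i + 1) m q →
      i ≤ k → k ≤ m + 1 → f k ∈ q.support → i + 1 ≤ k ∧ k ≤ m := by
    intro u w q k hq hk hk' hs
    obtain ⟨l, hl, hl', h⟩ := hq.supp _ hs
    have := hinj k l hk hk' (by omega) (by omega) h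
    omega
  -- Crossing the outer chord from `x` to `y` and stepping inwards extends an inner zigzag.
  have key : ∀ {u w : V} (q : G.Walk u w), Zig G f (K \ {(i, m + 1)}) (i + 1) m q →
      ∀ x y (hxy : G.Adj x y) (hyu : G.Adj y u),
        ((x = f i ∧ y = f (m + 1) ∧ u = f m) ∨ (x = f (m + 1) ∧ y = f i ∧ u = f (i + 1))) →
        Zig G f K i (m + 1) (SimpleGraph.Walk.cons hxy (SimpleGraph.Walk.cons hyu q)) := by
    intro u w q hq x y hxy hyu hor
    have hfi : f i ∉ q.support := fun h => by have := hnot q i hq le_rfl (by omega) h; omega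
    have hfm : f (m + 1) ∉ q.support := fun h => by
      have := hnot q (m + 1) hq (by omega) (by omega) h; omega
    refine ⟨?_, ?_, ?_, ?_⟩
    · refine (hq.isPath.cons ?_).cons ?_
      · rcases hor with ⟨-, rfl, -⟩ | ⟨-, rfl, -⟩ <;> assumption
      · rw [SimpleGraph.Walk.support_cons, List.mem_cons]
        rintro (h | h)
        · exact hxy.ne h
        · rcases hor with ⟨rfl, -, -⟩ | ⟨rfl, -, -⟩ <;> contradiction
    · intro z hz
      simp only [SimpleGraph.Walk.support_cons, List.mem_cons] at hz
      rcases hz with rfl | rfl | hz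
      · rcases hor with ⟨h, -⟩ | ⟨h, -⟩
        · exact ⟨i, le_rfl, by omega, h⟩
        · exact ⟨m + 1, by omega, by omega, h⟩
      · rcases hor with ⟨-, h, -⟩ | ⟨-, h, -⟩
        · exact ⟨m + 1, by omega, by omega, h⟩
        · exact ⟨i, le_rfl, by omega, h⟩
      · obtain ⟨k, hk, hk', h⟩ := hq.supp z hz
        exact ⟨k, by omega, by omega, h⟩
    · intro p hp
      simp only [SimpleGraph.Walk.edges_cons, List.mem_cons]
      by_cases hpc : p = (i, m + 1)
      · left
        rcases hor with ⟨h, h', -⟩ | ⟨h, h', -⟩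
        · rw [hpc, h, h']
        · rw [hpc, h, h', Sym2.eq_swap]
      · exact .inr (.inr (hq.cover p ⟨hp, hpc⟩))
    · intro e he
      simp only [SimpleGraph.Walk.edges_cons, List.mem_cons] at he
      rcases he with rfl | rfl | he
      · left
        refine ⟨_, hc, ?_⟩
        rcases hor with ⟨h, h', -⟩ | ⟨h, h', -⟩
        · rw [h, h']
        · rw [h, h', Sym2.eq_swap]
      · right
        rcases hor with ⟨-, h', h⟩ | ⟨-, h', h⟩
        · exact ⟨m, by omega, by omega, by rw [h, h', Sym2.eq_swap]⟩
        · exact ⟨i, by omega, by omega, by rw [h, h']⟩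
      · rcases hq.edges e he with ⟨p, hp, h⟩ | ⟨k, hk, hk', h⟩
        · exact .inl ⟨p, hp.1, h⟩
        · exact .inr ⟨k, by omega, by omega, h⟩
  refine ⟨w₂, w₁, .cons hcadj (.cons (hadj m (by omega) (by omega)).symm q₂),
    .cons hcadj.symm (.cons (hadj i (by omega) (by omega)) q₁),
    key _ h₂ _ _ _ _ (.inl ⟨rfl, rfl, rfl⟩), key _ h₁ _ _ _ _ (.inr ⟨rfl, rfl, rfl⟩), ?_⟩
  have hS : ∀ a b c d, i ≤ a → a ≤ m + 1 → i ≤ b → b ≤ m + 1 → i ≤ c → c ≤ m + 1 →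
      i ≤ d → d ≤ m + 1 → s(f a, f b) = s(f c, f d) → (a = c ∧ b = d) ∨ (a = d ∧ b = c) := by
    intro a b c d ha ha' hb hb' hc hc' hd hd' h
    rw [Sym2.eq_iff] at h
    rcases h with ⟨h, h'⟩ | ⟨h, h'⟩
    · exact .inl ⟨hinj _ _ ha ha' hc hc' h, hinj _ _ hb hb' hd hd' h'⟩
    · exact .inr ⟨hinj _ _ ha ha' hd hd' h, hinj _ _ hb hb' hc hc' h'⟩
  rintro k hk hk' ⟨he₁, he₂⟩
  simp only [SimpleGraph.Walk.edges_cons, List.mem_cons] at he₁ he₂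
  have hin : ∀ {u w : V} (q : G.Walk u w), Zig G f (K \ {(i, m + 1)}) (i + 1) m q →
      s(f k, f (k + 1)) ∈ q.edges → i + 1 ≤ k ∧ k < m := by
    intro u w q hq h
    have h1 := hnot q k hq hk (by omega) (q.fst_mem_support_of_mem_edges h)
    have h2 := hnot q (k + 1) hq (by omega) (by omega) (q.snd_mem_support_of_mem_edges h)
    omega
  rcases he₁ with h | h | h
  · have := hS _ _ _ _ (by omega) (by omega) (by omega) (by omega) (by omega) (by omega)
      (by omega) (by omega) h
    omega
  · have hkm := hS _ _ _ _ (by omega) (by omega) (by omega) (by omega) (by omega) (by omega)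
      (by omega) (by omega) h
    rcases he₂ with h' | h' | h'
    · have := hS _ _ _ _ (by omega) (by omega) (by omega) (by omega) (by omega) (by omega)
        (by omega) (by omega) h'
      omega
    · have := hS _ _ _ _ (by omega) (by omega) (by omega) (by omega) (by omega) (by omega)
        (by omega) (by omega) h'
      omega
    · have := hin _ h₁ h'
      omega
  · have hkm := hin _ h₂ h
    rcases he₂ with h' | h' | h'
    · have := hS _ _ _ _ (by omega) (by omega) (by omega) (by omega) (by omega) (by omega)
        (by omega) (by omega) h'
      omega
    · have := hS _ _ _ _ (by omega) (by omega) (by omega) (by omega) (by omega) (by omega)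
        (by omega) (by omega) h'
      omega
    · exact hd k hkm.1 hkm.2 ⟨h', h⟩

/-! ### Pósa rotations -/

/-- The vertices `f 0, …, f n` form a path of `G` inside `U`; values of `f` beyond `n` are
irrelevant. -/
structure IsLine {V : Type} (G : SimpleGraph V) (U : Finset V) (n : ℕ) (f : ℕ → V) : Prop where
  inj : ∀ a b, a ≤ n → b ≤ n → f a = f b → a = b
  mem : ∀ k, k ≤ n → f k ∈ U
  adj : ∀ k, k < n → G.Adj (f k) (f (k + 1))

/-- The Pósa rotation of `f` along an edge from `f 0` to `f j`: the part before position `j` is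
reversed, so `f (j - 1)` becomes the new moving end. -/
def pivot {V : Type} (f : ℕ → V) (j : ℕ) : ℕ → V :=
  fun k => if k < j then f (j - 1 - k) else f k

/-- `Reach G n f₀ f`: the path `f` arises from `f₀` by successive rotations fixing the end at
position `n`. -/
inductive Reach {V : Type} (G : SimpleGraph V) (n : ℕ) (f₀ : ℕ → V) : (ℕ → V) → Prop
  | refl : Reach G n f₀ f₀
  | step (f : ℕ → V) (j : ℕ) : Reach G n f₀ f → 1 ≤ j → j ≤ n → G.Adj (f 0) (f j) →
      Reach G n f₀ (pivot f j)

theorem isLine_pivot {V : Type} {G : SimpleGraph V} {U : Finset V} {n : ℕ} {f : ℕ → V}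
    (h : IsLine G U n f) {j : ℕ} (hj : 1 ≤ j) (hjn : j ≤ n) (ha : G.Adj (f 0) (f j)) :
    IsLine G U n (pivot f j) := by
  refine ⟨?_, ?_, ?_⟩
  · intro a b han hbn hab
    unfold pivot at hab
    split_ifs at hab <;>
      · have := h.inj _ _ (by omega) (by omega) hab
        omega
  · intro k hk
    unfold pivot
    split_ifs <;> exact h.mem _ (by omega)
  · intro k hk
    unfold pivot
    split_ifs with h1 h2 h2
    · have := (h.adj (j - 1 - (k + 1)) (by omega)).symm
      rwa [show j - 1 - (k + 1) + 1 = j - 1 - k by omega] at this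
    · obtain rfl : k + 1 = j := by omega
      simpa using ha
    · omega
    · exact h.adj k hk

theorem Reach.isLine {V : Type} {G : SimpleGraph V} {U : Finset V} {n : ℕ} {f₀ f : ℕ → V}
    (h₀ : IsLine G U n f₀) (h : Reach G n f₀ f) : IsLine G U n f := by
  induction h with
  | refl => exact h₀
  | step f j _ hj hjn ha ih => exact isLine_pivot ih hj hjn ha

theorem Reach.last {V : Type} {G : SimpleGraph V} {n : ℕ} {f₀ f : ℕ → V}
    (h : Reach G n f₀ f) : f n = f₀ n := by
  induction h with
  | refl => rfl
  | step f j _ hj hjn ha ih =>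
    unfold pivot
    rw [if_neg (by omega), ih]

theorem Reach.image {V : Type} {G : SimpleGraph V} {n : ℕ} {f₀ f : ℕ → V}
    (h : Reach G n f₀ f) : ∀ k ≤ n, ∃ l ≤ n, f k = f₀ l := by
  induction h with
  | refl => exact fun k hk => ⟨k, hk, rfl⟩
  | step f j _ hj hjn ha ih =>
    intro k hk
    unfold pivot
    split_ifs
    · exact ih _ (by omega)
    · exact ih _ hk

/-- An edge of the original path is lost in a rotation only if one of its ends becomes the moving
end. -/
theorem Reach.keep {V : Type} {G : SimpleGraph V} {n : ℕ} {f₀ f : ℕ → V}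
    (h : Reach G n f₀ f) : ∀ k < n,
      (∃ g, Reach G n f₀ g ∧ (g 0 = f₀ k ∨ g 0 = f₀ (k + 1))) ∨
      ∃ i < n, (f i = f₀ k ∧ f (i + 1) = f₀ (k + 1)) ∨
        (f i = f₀ (k + 1) ∧ f (i + 1) = f₀ k) := by
  induction h with
  | refl => exact fun k hk => .inr ⟨k, hk, .inl ⟨rfl, rfl⟩⟩
  | step f j hr hj hjn ha ih =>
    intro k hk
    rcases ih k hk with h | ⟨i, hi, h⟩
    · exact .inl h
    rcases lt_trichotomy (i + 1) j with hij | hij | hij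
    · refine .inr ⟨j - 2 - i, by omega, ?_⟩
      unfold pivot
      rw [if_pos (by omega), if_pos (by omega), show j - 1 - (j - 2 - i) = i + 1 by omega,
        show j - 1 - (j - 2 - i + 1) = i by omega]
      tauto
    · left
      refine ⟨_, .step f j hr hj hjn ha, ?_⟩
      have : pivot f j 0 = f i := by
        unfold pivot
        rw [if_pos (by omega)]
        congr 1
        omega
      rw [this]
      tauto
    · refine .inr ⟨i, hi, ?_⟩
      unfold pivot
      rw [if_neg (by omega), if_neg (by omega)]
      exact h

/-- If a reachable moving end is adjacent to `f₀ k`, then `f₀ k` or one of its neighbours on the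
original path is itself a reachable end: otherwise all original path edges at `f₀ k` survive in
`f`, and rotating at `f₀ k` makes one of those neighbours the moving end. -/
theorem Reach.neighbor {V : Type} {G : SimpleGraph V} {U : Finset V} {n : ℕ} {f₀ f : ℕ → V}
    (h₀ : IsLine G U n f₀) (h : Reach G n f₀ f) {k : ℕ} (hk : k ≤ n)
    (ha : G.Adj (f 0) (f₀ k)) :
    ∃ g, Reach G n f₀ g ∧
      (g 0 = f₀ k ∨ (1 ≤ k ∧ g 0 = f₀ (k - 1)) ∨ (k < n ∧ g 0 = f₀ (k + 1))) := by
  rcases Nat.eq_zero_or_pos k with rfl | hk0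
  · exact ⟨f₀, .refl, .inl rfl⟩
  have hl := h.isLine h₀
  by_contra! hcon
  -- The edges of `f₀` at `f₀ k` survive in `f`.
  have hprev : ∃ i < n, (f i = f₀ (k - 1) ∧ f (i + 1) = f₀ k) ∨
      (f i = f₀ k ∧ f (i + 1) = f₀ (k - 1)) := by
    have := h.keep (k - 1) (by omega)
    rw [Nat.sub_add_cancel hk0] at this
    rcases this with ⟨g, hg, h'⟩ | h'
    · have := hcon g hg
      have := this.2.1 hk0
      tauto
    · exact h'
  have hnot : ∀ j, 1 ≤ j → j ≤ n → f j = f₀ k →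
      f (j - 1) ≠ f₀ (k - 1) ∧ (k < n → f (j - 1) ≠ f₀ (k + 1)) := by
    intro j hj hjn hjk
    have hr := Reach.step f j h hj hjn (hjk ▸ ha)
    have h0 : pivot f j 0 = f (j - 1) := by
      unfold pivot
      rw [if_pos (by omega)]
      rfl
    have := hcon _ hr
    rw [h0] at this
    exact ⟨this.2.1 hk0, this.2.2⟩
  obtain ⟨i, hi, ⟨h1, h2⟩ | ⟨h1, h2⟩⟩ := hprev
  · exact (hnot (i + 1) (by omega) (by omega) h2).1 (by simpa using h1)
  have hi0 : 1 ≤ i := by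
    rcases Nat.eq_zero_or_pos i with rfl | h'
    · exact (ha.ne h1).elim
    · exact h'
  rcases Nat.eq_or_lt_of_le hk with rfl | hkn
  · -- The fixed end has only one neighbour on the path.
    have := hl.inj i k (by omega) le_rfl (h1.trans h.last.symm)
    omega
  rcases h.keep k hkn with ⟨g, hg, h'⟩ | ⟨l, hln, ⟨h3, h4⟩ | ⟨h3, h4⟩⟩
  · have := hcon g hg
    have := this.2.2 hkn
    tauto
  · obtain rfl := hl.inj l i (by omega) (by omega) (h3.trans h1.symm)
    have := h₀.inj _ _ (by omega) (by omega) (h2.symm.trans h4)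
    omega
  · have := hl.inj (l + 1) i (by omega) (by omega) (h4.trans h1.symm)
    obtain rfl : i = l + 1 := this.symm
    exact (hnot (l + 1) hi0 (by omega) h1).2 hkn (by simpa using h3)

/-- Pósa's lemma for a longest path `f` in `U`: `S` is the set of positions (along `f`) of the
reachable ends, and `I` adds to it the adjacent positions. -/
theorem exists_posa {V : Type} (G : SimpleGraph V) (U : Finset V)
    (hU : U.Nonempty) :
    ∃ (n : ℕ) (f : ℕ → V) (S I : Finset ℕ), IsLine G U n f ∧ S.Nonempty ∧
      S ⊆ I ∧ I ⊆ Finset.range (n + 1) ∧ I.card ≤ 3 * S.card ∧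
      ∀ k ∈ S, ∀ z ∈ U, G.Adj (f k) z → ∃ l ∈ I, z = f l := by
  classical
  have hbound : ∀ n f, IsLine G U n f → n < U.card := by
    intro n f h
    have := Finset.card_le_card_of_injOn (s := Finset.range (n + 1)) (t := U) f
      (fun k hk => h.mem k (by simp at hk; omega))
      (fun a ha b hb hab => h.inj a b (by simp at ha; omega) (by simp at hb; omega) hab)
    simp at this
    omega
  obtain ⟨n, f₀, h₀, hmax⟩ : ∃ n f₀, IsLine G U n f₀ ∧ ∀ f, ¬ IsLine G U (n + 1) f := by
    by_contra! hcon
    have : ∀ n, ∃ f, IsLine G U n f := by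
      intro n
      induction n with
      | zero =>
        obtain ⟨u, hu⟩ := hU
        exact ⟨fun _ => u, ⟨fun a b ha hb _ => by omega, fun _ _ => hu, fun k hk => by omega⟩⟩
      | succ n ih =>
        obtain ⟨f, hf⟩ := ih
        exact hcon n f hf
    obtain ⟨f, hf⟩ := this U.card
    exact absurd (hbound _ f hf) (lt_irrefl _)
  obtain ⟨S, hS⟩ : ∃ S : Finset ℕ, ∀ k, k ∈ S ↔ k ≤ n ∧ ∃ g, Reach G n f₀ g ∧ g 0 = f₀ k :=
    ⟨(Finset.range (n + 1)).filter fun k => ∃ g, Reach G n f₀ g ∧ g 0 = f₀ k, by simp⟩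
  refine ⟨n, f₀, S, S ∪ ((S.image (· + 1)) ∪ (S.image (· - 1))).filter (· < n + 1),
    h₀, ⟨0, (hS 0).2 ⟨by omega, f₀, .refl, rfl⟩⟩, Finset.subset_union_left, ?_, ?_, ?_⟩
  · intro k hk
    rw [Finset.mem_union, Finset.mem_filter] at hk
    rcases hk with hk | hk
    · simpa using ((hS k).1 hk).1
    · simpa using hk.2
  · have h1 := Finset.card_union_le S
      (((S.image (· + 1)) ∪ (S.image (· - 1))).filter (· < n + 1))
    have h2 := Finset.card_filter_le ((S.image (· + 1)) ∪ (S.image (· - 1))) (· < n + 1)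
    have h3 := Finset.card_union_le (S.image (· + 1)) (S.image (· - 1))
    have h4 : (S.image (· + 1)).card ≤ S.card := Finset.card_image_le
    have h5 : (S.image (· - 1)).card ≤ S.card := Finset.card_image_le
    omega
  · intro k hk z hz ha
    obtain ⟨hkn, g, hg, hgk⟩ := (hS k).1 hk
    have hgl := hg.isLine h₀
    rw [← hgk] at ha
    -- By maximality, all neighbours of the moving end lie on the path.
    obtain ⟨l, hl, rfl⟩ : ∃ l ≤ n, z = f₀ l := by
      by_contra! hcon
      have hne : ∀ m ≤ n, g m ≠ z := by
        intro m hm h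
        obtain ⟨l, hl, h'⟩ := hg.image m hm
        exact hcon l hl (h ▸ h')
      refine hmax (fun m => if m = 0 then z else g (m - 1)) ⟨?_, ?_, ?_⟩
      · intro a b han hbn hab
        split_ifs at hab with h1 h2 h2
        · omega
        · exact (hne _ (by omega) hab.symm).elim
        · exact (hne _ (by omega) hab).elim
        · have := hgl.inj _ _ (by omega) (by omega) hab
          omega
      · intro m hm
        split_ifs
        · exact hz
        · exact hgl.mem _ (by omega)
      · intro m hm
        rcases Nat.eq_zero_or_pos m with rfl | hm0
        · simpa using ha.symm
        · rw [if_neg (by omega), if_neg (by omega)]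
          have := hgl.adj (m - 1) (by omega)
          rwa [Nat.sub_add_cancel hm0] at this
    refine ⟨l, ?_, rfl⟩
    obtain ⟨g', hg', h⟩ := hg.neighbor h₀ hl ha
    rw [Finset.mem_union, Finset.mem_filter, Finset.mem_union, Finset.mem_image, Finset.mem_image]
    rcases h with h | ⟨h1, h⟩ | ⟨h1, h⟩
    · exact .inl ((hS l).2 ⟨hl, g', hg', h⟩)
    · exact .inr ⟨.inl ⟨l - 1, (hS _).2 ⟨by omega, g', hg', h⟩, by omega⟩, by omega⟩
    · exact .inr ⟨.inr ⟨l + 1, (hS _).2 ⟨by omega, g', hg', h⟩, by omega⟩, by omega⟩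

/-! ### Separating the edges met by a rotation set -/

/-- A walk of `G` bundled with its two ends. -/
abbrev SPath {V : Type} (G : SimpleGraph V) : Type := (u : V) × (v : V) × G.Walk u v

theorem length_flatMap_le {α β : Type} (l : List α) (L : α → List β) (c : ℕ)
    (h : ∀ a, (L a).length ≤ c) : (l.flatMap L).length ≤ l.length * c := by
  induction l with
  | nil => simp
  | cons a l ih =>
    rw [List.flatMap_cons, List.length_append, List.length_cons, Nat.succ_mul]
    have := h a
    omega

/-- For a strictly nested family `K` of chords of a path, the two zigzags have exactly the chords
in `K` as common edges. -/
theorem exists_class {V : Type} {G : SimpleGraph V} {U : Finset V} {n : ℕ} {f : ℕ → V}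
    (h : IsLine G U n f) (K : Set (ℕ × ℕ))
    (hK : ∀ p ∈ K, p.1 + 2 ≤ p.2 ∧ p.2 ≤ n ∧ G.Adj (f p.1) (f p.2))
    (hnest : ∀ p ∈ K, ∀ p' ∈ K, p ≠ p' →
      (p.1 < p'.1 ∧ p'.2 < p.2) ∨ (p'.1 < p.1 ∧ p.2 < p'.2)) :
    ∃ L : List (SPath G), L.length ≤ 2 ∧ (∀ q ∈ L, q.2.2.IsPath) ∧
      (∀ p ∈ K, ∀ q ∈ L, s(f p.1, f p.2) ∈ q.2.2.edges) ∧
      ∀ e, (∀ q ∈ L, e ∈ q.2.2.edges) → ∃ p ∈ K, e = s(f p.1, f p.2) := by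
  obtain ⟨w₁, w₂, q₁, q₂, h₁, h₂, hd⟩ := exists_zig G f n 0 n K (by omega)
    (fun a b _ ha _ hb => h.inj a b ha hb) (fun k _ hk => h.adj k hk)
    (fun p hp => ⟨by omega, hK p hp⟩) hnest
  refine ⟨[⟨_, _, q₁⟩, ⟨_, _, q₂⟩], by simp, ?_, ?_, ?_⟩
  · simp [h₁.isPath, h₂.isPath]
  · intro p hp
    simp [h₁.cover p hp, h₂.cover p hp]
  · intro e he
    simp only [List.mem_cons, List.not_mem_nil, or_false, forall_eq_or_imp, forall_eq] at he
    rcases h₁.edges e he.1 with h | ⟨k, hk, hk', rfl⟩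
    · exact h
    · exact (hd k hk hk' he).elim

/-- Each edge joining two positions of `I` on a path is separated from every other unordered pair
by one of at most `11 |I|` paths. -/
theorem exists_line_system {V : Type} {G : SimpleGraph V} {U : Finset V} {n : ℕ} {f : ℕ → V}
    (h : IsLine G U n f) (I : Finset ℕ) (hI : I ⊆ Finset.range (n + 1)) :
    ∃ Ps : List (SPath G), Ps.length ≤ 11 * I.card ∧ (∀ q ∈ Ps, q.2.2.IsPath) ∧
      ∀ a ∈ I, ∀ b ∈ I, a < b → G.Adj (f a) (f b) → ∀ e, e ≠ s(f a, f b) →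
        ∃ q ∈ Ps, s(f a, f b) ∈ q.2.2.edges ∧ e ∉ q.2.2.edges := by
  -- The rank of a position within `I`.
  obtain ⟨r, hr, hrI⟩ : ∃ r : ℕ → ℕ, (∀ a ∈ I, ∀ b ∈ I, a < b → r a < r b) ∧
      ∀ a ∈ I, r a < I.card := by
    refine ⟨fun a => (I.filter (· < a)).card, ?_, ?_⟩
    · intro a ha b hb hab
      refine Finset.card_lt_card ⟨?_, ?_⟩
      · intro x hx
        simp only [Finset.mem_filter] at hx ⊢
        exact ⟨hx.1, hx.2.trans hab⟩
      · intro hsub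
        have : a ∈ I.filter (· < a) := hsub (by simp [ha, hab])
        simp at this
    · intro a ha
      exact Finset.card_lt_card (Finset.filter_ssubset.2 ⟨a, ha, by simp⟩)
  have hIn : ∀ a ∈ I, a ≤ n := fun a ha => by
    have := hI ha
    simp at this
    omega
  -- The chord classes; they are strictly nested for `c ≥ 1` and are used for `c = 1` and `c = 2`.
  let K : ℕ → ℕ → Set (ℕ × ℕ) := fun c s =>
    {p | p.1 ∈ I ∧ p.2 ∈ I ∧ p.1 + 2 ≤ p.2 ∧ G.Adj (f p.1) (f p.2) ∧ c * r p.1 + r p.2 = s}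
  have hinjr : ∀ a ∈ I, ∀ b ∈ I, r a = r b → a = b := by
    intro a ha b hb hab
    rcases lt_trichotomy a b with h' | h' | h'
    · have := hr a ha b hb h'
      omega
    · exact h'
    · have := hr b hb a ha h'
      omega
  have hlt : ∀ a ∈ I, ∀ b ∈ I, r a < r b → a < b := by
    intro a ha b hb hab
    by_contra h'
    rcases Nat.eq_or_lt_of_le (not_lt.1 h') with h' | h'
    · rw [h'] at hab
      omega
    · have := hr b hb a ha h'
      omega
  have hnest1 : ∀ c s, 1 ≤ c → ∀ p ∈ K c s, ∀ p' ∈ K c s, p.1 < p'.1 → p'.2 < p.2 := by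
    rintro c s hc p ⟨h1, h2, -, -, h3⟩ p' ⟨h1', h2', -, -, h3'⟩ hpp
    refine hlt _ h2' _ h2 ?_
    have := Nat.mul_lt_mul_of_pos_left (hr _ h1 _ h1' hpp) hc
    omega
  have hex : ∀ c s, ∃ L : List (SPath G), 1 ≤ c → L.length ≤ 2 ∧ (∀ q ∈ L, q.2.2.IsPath) ∧
      (∀ p ∈ K c s, ∀ q ∈ L, s(f p.1, f p.2) ∈ q.2.2.edges) ∧
      ∀ e, (∀ q ∈ L, e ∈ q.2.2.edges) → ∃ p ∈ K c s, e = s(f p.1, f p.2) := by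
    intro c s
    by_cases hc : 1 ≤ c
    swap
    · exact ⟨[], fun h => (hc h).elim⟩
    obtain ⟨L, hL⟩ := exists_class h (K c s)
      (fun p hp => ⟨hp.2.2.1, hIn _ hp.2.1, hp.2.2.2.1⟩) (by
        intro p hp p' hp' hne
        rcases lt_trichotomy p.1 p'.1 with h' | h' | h'
        · exact .inl ⟨h', hnest1 c s hc p hp p' hp' h'⟩
        · refine (hne (Prod.ext h' (hinjr _ hp.2.1 _ hp'.2.1 ?_))).elim
          have h1 := hp.2.2.2.2
          have h2 := hp'.2.2.2.2
          rw [h'] at h1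
          omega
        · exact .inr ⟨h', hnest1 c s hc p' hp' p hp h'⟩)
    exact ⟨L, fun _ => hL⟩
  choose L hL using hex
  have hex1 : ∀ k, ∃ M : List (SPath G), M.length ≤ 1 ∧ (∀ q ∈ M, q.2.2.IsPath) ∧
      (k < n → ∃ q ∈ M, q.2.2.edges = [s(f k, f (k + 1))]) := by
    intro k
    by_cases hk : k < n
    · refine ⟨[⟨_, _, .cons (h.adj k hk) .nil⟩], by simp, ?_, by simp⟩
      simpa using (h.adj k hk).ne
    · exact ⟨[], by simp, by simp, fun h => (hk h).elim⟩
  choose M hM using hex1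
  refine ⟨I.toList.flatMap M ++ ((List.range (2 * I.card)).flatMap (L 1) ++
    (List.range (3 * I.card)).flatMap (L 2)), ?_, ?_, ?_⟩
  · have h1 := length_flatMap_le I.toList M 1 fun a => (hM a).1
    have h2 := length_flatMap_le (List.range (2 * I.card)) (L 1) 2 fun a => (hL 1 a le_rfl).1
    have h3 := length_flatMap_le (List.range (3 * I.card)) (L 2) 2
      fun a => (hL 2 a (by omega)).1
    simp only [List.length_append, List.length_range, Finset.length_toList] at *
    omega
  · intro q hq
    simp only [List.mem_append, List.mem_flatMap] at hq
    rcases hq with ⟨k, -, hq⟩ | ⟨k, -, hq⟩ | ⟨k, -, hq⟩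
    · exact (hM k).2.1 q hq
    · exact (hL 1 k le_rfl).2.1 q hq
    · exact (hL 2 k (by omega)).2.1 q hq
  · intro a ha b hb hab hadj e he
    by_cases hab2 : b = a + 1
    · subst hab2
      obtain ⟨q, hq, hqe⟩ := (hM a).2.2 (by have := hIn _ hb; omega)
      refine ⟨q, ?_, by simp [hqe], by simpa [hqe] using he⟩
      simp only [List.mem_append, List.mem_flatMap]
      exact .inl ⟨a, by simpa using ha, hq⟩
    by_contra! hcon
    have hra := hrI a ha
    have hrb := hrI b hb
    have hget : ∀ c, 1 ≤ c → c ≤ 2 → ∃ p ∈ K c (c * r a + r b), e = s(f p.1, f p.2) := by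
      intro c hc hc2
      refine (hL c _ hc).2.2.2 e fun q hq => hcon q ?_ ?_
      · simp only [List.mem_append, List.mem_flatMap, List.mem_range]
        rcases (show c = 1 ∨ c = 2 by omega) with rfl | rfl
        · exact .inr (.inl ⟨_, by omega, hq⟩)
        · exact .inr (.inr ⟨_, by omega, hq⟩)
      · exact (hL c _ hc).2.2.1 (a, b) ⟨ha, hb, by simp only; omega, hadj, rfl⟩ q hq
    -- The values of `r a + r b` and `2 * r a + r b` determine `a` and `b`.
    obtain ⟨p, ⟨h1, h2, h3, -, h4⟩, hpe⟩ := hget 1 le_rfl (by omega)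
    obtain ⟨p', ⟨h1', h2', h3', -, h4'⟩, hpe'⟩ := hget 2 (by omega) le_rfl
    have heq := hpe.symm.trans hpe'
    rw [Sym2.eq_iff] at heq
    have i1 := hIn _ h1
    have i2 := hIn _ h2
    have i1' := hIn _ h1'
    have i2' := hIn _ h2'
    rcases heq with ⟨e1, e2⟩ | ⟨e1, e2⟩
    · have e1 := h.inj _ _ i1 i1' e1
      have e2 := h.inj _ _ i2 i2' e2
      rw [← e1, ← e2] at h4'
      have e3 := hinjr _ h1 _ ha (by omega)
      have e4 := hinjr _ h2 _ hb (by omega)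
      rw [e3, e4] at hpe
      exact he hpe
    · have e1 := h.inj _ _ i1 i2' e1
      have e2 := h.inj _ _ i2 i1' e2
      omega

/-! ### Induction on the vertex set -/

/-- Every edge inside `U` is separated from every other unordered pair. Since the second pair is
arbitrary, the paths found for `U` minus the rotation set need not avoid that set. -/
theorem exists_system {V : Type} (G : SimpleGraph V) (m : ℕ) :
    ∀ U : Finset V, U.card = m →
      ∃ Ps : List (SPath G), Ps.length ≤ 33 * m ∧ (∀ q ∈ Ps, q.2.2.IsPath) ∧
        ∀ x ∈ U, ∀ y ∈ U, G.Adj x y → ∀ e, e ≠ s(x, y) →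
          ∃ q ∈ Ps, s(x, y) ∈ q.2.2.edges ∧ e ∉ q.2.2.edges := by
  classical
  induction m using Nat.strong_induction_on with
  | _ m ih =>
  intro U hU
  rcases U.eq_empty_or_nonempty with rfl | hne
  · exact ⟨[], by simp, by simp, by simp⟩
  obtain ⟨n, f, S, I, hf, hSne, hSI, hI, hcard, hN⟩ := exists_posa G U hne
  obtain ⟨Ps, hlen, hpath, hsep⟩ := exists_line_system hf I hI
  have hIn : ∀ a ∈ I, a ≤ n := fun a ha => by
    have := hI ha
    simp at this
    omega
  have hsub : S.image f ⊆ U := by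
    intro x hx
    obtain ⟨k, hk, rfl⟩ := Finset.mem_image.1 hx
    exact hf.mem k (hIn k (hSI hk))
  have hSc : (S.image f).card = S.card := Finset.card_image_of_injOn
    fun a ha b hb hab => hf.inj a b (hIn a (hSI ha)) (hIn b (hSI hb)) hab
  have hdiff : (U \ S.image f).card = m - S.card := by
    rw [Finset.card_sdiff_of_subset hsub, hU, hSc]
  have hSm : S.card ≤ m := hSc ▸ hU ▸ Finset.card_le_card hsub
  have hS0 := hSne.card_pos
  obtain ⟨Qs, hQlen, hQpath, hQsep⟩ := ih (m - S.card) (by omega) _ hdiff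
  have hS : ∀ k ∈ S, ∀ y ∈ U, G.Adj (f k) y → ∀ e, e ≠ s(f k, y) →
      ∃ q ∈ Ps, s(f k, y) ∈ q.2.2.edges ∧ e ∉ q.2.2.edges := by
    intro k hk y hy hadj e he
    obtain ⟨l, hl, rfl⟩ := hN k hk y hy hadj
    rcases lt_trichotomy k l with h | h | h
    · exact hsep k (hSI hk) l hl h hadj e he
    · exact (hadj.ne (by rw [h])).elim
    · rw [Sym2.eq_swap] at he ⊢
      exact hsep l hl k (hSI hk) h hadj.symm e he
  refine ⟨Ps ++ Qs, by rw [List.length_append]; omega, ?_, ?_⟩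
  · intro q hq
    rcases List.mem_append.1 hq with hq | hq
    · exact hpath q hq
    · exact hQpath q hq
  · intro x hx y hy hadj e he
    by_cases hxS : x ∈ S.image f
    · obtain ⟨k, hk, rfl⟩ := Finset.mem_image.1 hxS
      obtain ⟨q, hq, h⟩ := hS k hk y hy hadj e he
      exact ⟨q, List.mem_append_left _ hq, h⟩
    by_cases hyS : y ∈ S.image f
    · obtain ⟨k, hk, rfl⟩ := Finset.mem_image.1 hyS
      rw [Sym2.eq_swap] at he ⊢
      obtain ⟨q, hq, h⟩ := hS k hk x hx hadj.symm e he
      exact ⟨q, List.mem_append_left _ hq, h⟩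
    · obtain ⟨q, hq, h⟩ := hQsep x (by simp only [Finset.mem_sdiff]; exact ⟨hx, hxS⟩) y
        (by simp only [Finset.mem_sdiff]; exact ⟨hy, hyS⟩) hadj e he
      exact ⟨q, List.mem_append_right _ hq, h⟩


/-- There are a constant `C > 0` and `d₀` such that every graph `G` on `n` vertices
with average degree `d = 2e(G)/n ≥ d₀` has a subgraph `G₁ ⊆ G` of average degree at
most `log d` and a collection of at most `C n` paths strongly separating the edges of
`G` not in `G₁`. -/
theorem two_step_reduction :
    ∃ C : ℝ, 0 < C ∧ ∃ d₀ : ℝ,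
      ∀ (V : Type) [Fintype V] (G : SimpleGraph V),
        d₀ ≤ 2 * (G.edgeSet.ncard : ℝ) / (Fintype.card V : ℝ) →
        ∃ G₁ : SimpleGraph V, G₁ ≤ G ∧
          (2 * (G₁.edgeSet.ncard : ℝ) / (Fintype.card V : ℝ) ≤
            Real.logb 2 (2 * (G.edgeSet.ncard : ℝ) / (Fintype.card V : ℝ))) ∧
          ∃ Ps : List ((u : V) × (v : V) × G.Walk u v),
            (∀ p ∈ Ps, p.2.2.IsPath) ∧
            ((Ps.length : ℝ) ≤ C * (Fintype.card V : ℝ)) ∧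
            (∀ e ∈ G.edgeSet \ G₁.edgeSet, ∀ f ∈ G.edgeSet \ G₁.edgeSet, e ≠ f →
              ∃ p ∈ Ps, e ∈ p.2.2.edges ∧ f ∉ p.2.2.edges) := by
  refine ⟨33, by norm_num, 1, fun V _ G hd => ⟨⊥, bot_le, ?_, ?_⟩⟩
  · simpa using Real.logb_nonneg (by norm_num : (1 : ℝ) < 2) hd
  · obtain ⟨Ps, hlen, hpath, hsep⟩ := exists_system G (Fintype.card V) Finset.univ rfl
    refine ⟨Ps, hpath, by exact_mod_cast hlen, ?_⟩
    intro e he f _ hef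
    induction e using Sym2.ind with
    | _ x y => exact hsep x (Finset.mem_univ _) y (Finset.mem_univ _) he.1 f hef.symm
end

section
/- Let s ≥ 0, t ≥ 1 and 0 < ε ≤ 1/48, and let G be a graph on n vertices. Then there is a collection ℋ of pairwise edge-disjoint subgraphs of G, each of which is an (ε, s, t)-expander, such that the graphs in ℋ cover all but at most 48·s·n·(log t + 1)² edges of G, and Σ_{H∈ℋ} |H| ≤ 2n. -/
/-! Split greedily: a subgraph `H` on `n` vertices that fails to be an expander has a set `X` of
`a ≤ 2n/3` vertices and a set `F` of at most `s · min a t` edges such that `X` has fewer than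
`ε a / (log a + 1)²` neighbours in `H - F`. Delete `F`, and replace `H` by the graph of the
remaining edges that meet `X` (on `X` and its neighbourhood) and the graph of the remaining edges
that avoid `X` (on the complement of `X`). Both have fewer vertices than `H`, they are
edge-disjoint, and together they contain all edges of `H - F`.

Everything is controlled by one potential, `φ n = n (2 - 1 / (log n + 1))`, which satisfies
`n ≤ φ n ≤ 2n` for `n ≥ 1`. A split lowers the total potential by at least
`a / (4 (log a + 1)²)` (`potential_split`). Hence the total order of the final pieces is at most
`φ n ≤ 2n`. Since `x / (log x + 1)²` is increasing up to a constant factor, the drop, multiplied by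
`24 (log t + 1)²`, also pays for the `min a t` edges deleted per unit of `s` (`min_le_drop`), so at
most `24 s (log t + 1)² φ n` edges are lost altogether. -/


/-- The exterior neighbourhood `N_G(X)`: vertices outside `X` with a neighbour in `X`. -/
def extNbhd {V : Type*} (G : SimpleGraph V) (X : Set V) : Set V :=
  {v | v ∉ X ∧ ∃ u ∈ X, G.Adj u v}

/-- A graph `G` (on `Nat.card V` vertices) is an `(ε, s, t)`-expander if
`|N_{G−F}(X)| ≥ ε|X|/(log|X| + 1)²` for every vertex set `X` and edge set `F ⊆ E(G)`
with `1 ≤ |X| ≤ 2n/3` and `|F| ≤ s · min{|X|, t}`. -/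
def ESTExpander {V : Type*} (G : SimpleGraph V) (ε s t : ℝ) : Prop :=
  ∀ (X : Set V) (F : Set (Sym2 V)), F ⊆ G.edgeSet →
    1 ≤ X.ncard → (X.ncard : ℝ) ≤ 2 * (Nat.card V : ℝ) / 3 →
    (F.ncard : ℝ) ≤ s * min (X.ncard : ℝ) t →
    ε * (X.ncard : ℝ) / (Real.logb 2 (X.ncard : ℝ) + 1)^2 ≤
      ((extNbhd (G.deleteEdges F) X).ncard : ℝ)

/-! ### The potential function -/

/-- The potential of an `n`-vertex graph; the value at `0` is `0`. -/
noncomputable def potential (x : ℝ) : ℝ := x * (2 - 1 / (Real.logb 2 x + 1))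

lemma logb_two_nonneg {x : ℝ} (hx : 1 ≤ x) : 0 ≤ Real.logb 2 x :=
  Real.logb_nonneg (by norm_num) hx

lemma potential_zero : potential 0 = 0 := by simp [potential]

lemma le_potential {x : ℝ} (hx : 1 ≤ x) : x ≤ potential x := by
  have h := logb_two_nonneg hx
  have h1 : 1 / (Real.logb 2 x + 1) ≤ 1 := by
    rw [div_le_one (by linarith)]; linarith
  unfold potential
  nlinarith

lemma le_potential_nat (n : ℕ) : (n : ℝ) ≤ potential n := by
  rcases Nat.eq_zero_or_pos n with rfl | h
  · simp [potential_zero]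
  · exact le_potential (by exact_mod_cast h)

lemma potential_nat_le (n : ℕ) : potential n ≤ 2 * n := by
  rcases Nat.eq_zero_or_pos n with rfl | h
  · simp [potential_zero]
  · have hn : (1 : ℝ) ≤ n := by exact_mod_cast h
    have h0 := logb_two_nonneg hn
    have h1 : 0 ≤ 1 / (Real.logb 2 (n : ℝ) + 1) := by positivity
    unfold potential
    nlinarith

/-- Splitting off `a ≤ 2n/3` vertices with a small duplicated boundary of size `m` lowers the
potential. The part of order `a + m` is smaller than `n` by a constant factor, so its logarithm
drops by a constant, and this gain beats the cost `2m` of the duplication. -/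
lemma potential_split {a m n : ℝ} (ha : 1 ≤ a) (hm0 : 0 ≤ m)
    (hm : m ≤ 1 / 48 * (a / (Real.logb 2 a + 1) ^ 2)) (han : a ≤ 2 * n / 3) (hc : 1 ≤ n - a) :
    potential (a + m) + potential (n - a) + 1 / 4 * (a / (Real.logb 2 a + 1) ^ 2)
      ≤ potential n := by
  have hA := logb_two_nonneg ha
  have hC := logb_two_nonneg hc
  have hB0 := logb_two_nonneg (x := a + m) (by linarith)
  have hma : m ≤ a / 48 := by
    have : a / (Real.logb 2 a + 1) ^ 2 ≤ a := div_le_self (by linarith) (by nlinarith)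
    linarith
  have hAB : Real.logb 2 (a + m) ≤ Real.logb 2 a + 1 / 20 := by
    have h1 : Real.logb 2 (a + m) ≤ Real.logb 2 (a * (49 / 48)) :=
      Real.logb_le_logb_of_le (by norm_num) (by linarith) (by linarith)
    rw [Real.logb_mul (by linarith) (by norm_num)] at h1
    have h2 : Real.logb 2 ((49 / 48 : ℝ) ^ 20) ≤ 1 := by
      rw [Real.logb_le_iff_le_rpow (by norm_num) (by norm_num)]; norm_num
    rw [Real.logb_pow] at h2
    push_cast at h2
    linarith
  have hBN : Real.logb 2 (a + m) + 1 / 2 ≤ Real.logb 2 n := by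
    have h1 : Real.logb 2 ((a + m) * (72 / 49)) ≤ Real.logb 2 n :=
      Real.logb_le_logb_of_le (by norm_num) (by linarith) (by linarith)
    rw [Real.logb_mul (by linarith) (by norm_num)] at h1
    have h2 : 1 ≤ Real.logb 2 ((72 / 49 : ℝ) ^ 2) := by
      rw [Real.le_logb_iff_rpow_le (by norm_num) (by norm_num)]; norm_num
    rw [Real.logb_pow] at h2
    push_cast at h2
    linarith
  have hCN : Real.logb 2 (n - a) ≤ Real.logb 2 n :=
    Real.logb_le_logb_of_le (by norm_num) (by linarith) (by linarith)
  unfold potential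
  generalize Real.logb 2 a = A at *
  generalize Real.logb 2 (a + m) = B at *
  generalize Real.logb 2 n = N at *
  generalize Real.logb 2 (n - a) = C at *
  have hψC : 1 / (N + 1) ≤ 1 / (C + 1) :=
    one_div_le_one_div_of_le (by linarith) (by linarith)
  have hψB : 1 / (N + 1) + 3 / 10 * (1 / (A + 1) ^ 2) ≤ 1 / (B + 1) := by
    have h1 : 1 / (N + 1) ≤ 1 / (B + 3 / 2) :=
      one_div_le_one_div_of_le (by linarith) (by linarith)
    have h2 : 1 / (B + 3 / 2) + 1 / 3 * (1 / (B + 1) ^ 2) ≤ 1 / (B + 1) := by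
      have hz : 1 / (B + 1) - (1 / (B + 3 / 2) + 1 / 3 * (1 / (B + 1) ^ 2))
          = (B / 6) / ((B + 3 / 2) * (B + 1) ^ 2) := by
        field_simp
        ring
      have : 0 ≤ (B / 6) / ((B + 3 / 2) * (B + 1) ^ 2) := by positivity
      linarith
    have h3 : 3 / 10 * (1 / (A + 1) ^ 2) ≤ 1 / 3 * (1 / (B + 1) ^ 2) := by
      rw [mul_one_div, mul_one_div, div_le_div_iff₀ (by positivity) (by positivity)]
      have : (B + 1) ^ 2 ≤ (21 / 20 * (A + 1)) ^ 2 :=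
        pow_le_pow_left₀ (by linarith) (by linarith) 2
      nlinarith [sq_nonneg (A + 1)]
    linarith
  rw [div_eq_mul_one_div a] at hm ⊢
  have hq : 0 ≤ 1 / (A + 1) ^ 2 := by positivity
  have hd : 0 ≤ 1 / (N + 1) := one_div_nonneg.2 (by linarith)
  generalize 1 / (A + 1) ^ 2 = q at *
  generalize 1 / (B + 1) = b at *
  generalize 1 / (C + 1) = c at *
  generalize 1 / (N + 1) = d at *
  have e1 : (a + m) * (d + 3 / 10 * q) ≤ (a + m) * b :=
    mul_le_mul_of_nonneg_left hψB (by linarith)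
  have e2 : (n - a) * d ≤ (n - a) * c := mul_le_mul_of_nonneg_left hψC (by linarith)
  have e3 : 0 ≤ m * q := by positivity
  have e4 : 0 ≤ a * q := by positivity
  have e5 : 0 ≤ m * d := mul_nonneg hm0 hd
  nlinarith

/-- The drop in `potential_split`, scaled by `24 (log t + 1)²`, is at least `min a t`. For `a ≤ t`
this is monotonicity of the logarithm; for `t ≤ a` it says that `x / (log x + 1)²` is increasing up
to a factor of `6`. -/
lemma min_le_drop {a t : ℝ} (ha : 1 ≤ a) (ht : 1 ≤ t) :
    min a t ≤ 24 * (Real.logb 2 t + 1) ^ 2 * (1 / 4 * (a / (Real.logb 2 a + 1) ^ 2)) := by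
  have hA := logb_two_nonneg ha
  have hT := logb_two_nonneg ht
  have key : 24 * (Real.logb 2 t + 1) ^ 2 * (1 / 4 * (a / (Real.logb 2 a + 1) ^ 2))
      = (6 * a * (Real.logb 2 t + 1) ^ 2) / (Real.logb 2 a + 1) ^ 2 := by ring
  rw [key, le_div_iff₀ (by positivity)]
  rcases le_total a t with h | h
  · rw [min_eq_left h]
    have h1 : Real.logb 2 a ≤ Real.logb 2 t :=
      Real.logb_le_logb_of_le (by norm_num) (by linarith) h
    have h2 : (Real.logb 2 a + 1) ^ 2 ≤ (Real.logb 2 t + 1) ^ 2 :=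
      pow_le_pow_left₀ (by linarith) (by linarith) 2
    nlinarith [mul_le_mul_of_nonneg_left h2 (by linarith : 0 ≤ a), sq_nonneg (Real.logb 2 t + 1)]
  · rw [min_eq_right h]
    -- Write `a = t y²`; then `log y` is at most linear in `y`.
    obtain ⟨y, hy1, hay⟩ : ∃ y : ℝ, 1 ≤ y ∧ a = t * y ^ 2 := by
      refine ⟨√(a / t), ?_, ?_⟩
      · rw [Real.one_le_sqrt, le_div_iff₀ (by linarith)]; linarith
      · rw [Real.sq_sqrt (by positivity)]; field_simp
    have hlog : Real.logb 2 a = Real.logb 2 t + 2 * Real.logb 2 y := by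
      rw [hay, Real.logb_mul (by positivity) (by positivity), Real.logb_pow]; norm_num
    have hY := logb_two_nonneg hy1
    have hYle : 2 * Real.logb 2 y + 1 ≤ 2 * y := by
      -- The tangent-line bound at `2`: `log (y / 2) ≤ y / 2 - 1`.
      have h1 := Real.log_le_sub_one_of_pos (show 0 < y / 2 by linarith)
      rw [Real.log_div (by positivity) (by norm_num)] at h1
      have h2 : Real.logb 2 y * Real.log 2 = Real.log y := by
        rw [Real.logb]; field_simp
      nlinarith [Real.log_two_gt_d9, Real.log_two_lt_d9]
    have h3 : Real.logb 2 a + 1 ≤ (Real.logb 2 t + 1) * (2 * y) := by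
      rw [hlog]; nlinarith
    have h4 : (Real.logb 2 a + 1) ^ 2 ≤ ((Real.logb 2 t + 1) * (2 * y)) ^ 2 :=
      pow_le_pow_left₀ (by linarith) h3 2
    have h5 := mul_le_mul_of_nonneg_left h4 (by linarith : 0 ≤ t)
    have h6 : 0 ≤ t * y ^ 2 * (Real.logb 2 t + 1) ^ 2 := by positivity
    calc t * (Real.logb 2 a + 1) ^ 2 ≤ t * ((Real.logb 2 t + 1) * (2 * y)) ^ 2 := h5
      _ = 4 * (t * y ^ 2 * (Real.logb 2 t + 1) ^ 2) := by ring
      _ ≤ 6 * a * (Real.logb 2 t + 1) ^ 2 := by rw [hay]; linarith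

/-! ### Splitting a subgraph -/

section Split

variable {V : Type} {G : SimpleGraph V}

/-- The edges of `H` outside `F` that meet `X`, on the vertex set `X ∪ N`, where `N` contains all
the neighbours of `X` along such edges. -/
def touching (H : G.Subgraph) (X N : Set V) (F : Set (Sym2 V))
    (hXN : ∀ u ∈ X, ∀ v, H.Adj u v → s(u, v) ∉ F → v ∈ X ∪ N) : G.Subgraph where
  verts := X ∪ N
  Adj u v := H.Adj u v ∧ s(u, v) ∉ F ∧ (u ∈ X ∨ v ∈ X)
  adj_sub h := h.1.adj_sub
  edge_vert := by
    rintro u v ⟨h, hF, hu | hv⟩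
    · exact Or.inl hu
    · exact hXN v hv u h.symm (by rwa [Sym2.eq_swap])
  symm := ⟨fun u v ⟨h, hF, hu⟩ => ⟨h.symm, by rwa [Sym2.eq_swap], hu.symm⟩⟩

/-- The edges of `H` outside `F` that avoid `X`, on the vertices of `H` outside `X`. -/
def avoiding (H : G.Subgraph) (X : Set V) (F : Set (Sym2 V)) : G.Subgraph where
  verts := H.verts \ X
  Adj u v := H.Adj u v ∧ s(u, v) ∉ F ∧ u ∉ X ∧ v ∉ X
  adj_sub h := h.1.adj_sub
  edge_vert h := ⟨h.1.fst_mem, h.2.2.1⟩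
  symm := ⟨fun u v ⟨h, hF, hu, hv⟩ => ⟨h.symm, by rwa [Sym2.eq_swap], hv, hu⟩⟩

/-- A violation of the expander condition in `H.coe`, transported from the subtype `H.verts`
to `V`. -/
lemma exists_bad_of_not_expander [Finite V] (H : G.Subgraph) {ε s t : ℝ}
    (h : ¬ ESTExpander H.coe ε s t) :
    ∃ (X N : Set V) (F : Set (Sym2 V)), X ⊆ H.verts ∧ Disjoint X N ∧
      (∀ u ∈ X, ∀ v, H.Adj u v → s(u, v) ∉ F → v ∈ X ∪ N) ∧
      1 ≤ X.ncard ∧ (X.ncard : ℝ) ≤ 2 * (H.verts.ncard : ℝ) / 3 ∧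
      (F.ncard : ℝ) ≤ s * min (X.ncard : ℝ) t ∧
      (N.ncard : ℝ) < ε * (X.ncard : ℝ) / (Real.logb 2 (X.ncard : ℝ) + 1) ^ 2 := by
  unfold ESTExpander at h
  push Not at h
  obtain ⟨X, F, hF, h1, h2, h3, h4⟩ := h
  have hinj : Function.Injective (Subtype.val : H.verts → V) := Subtype.val_injective
  refine ⟨Subtype.val '' X, Subtype.val '' extNbhd (H.coe.deleteEdges F) X,
    Sym2.map Subtype.val '' F, ?_, ?_, ?_, ?_, ?_, ?_, ?_⟩
  · rintro _ ⟨x, -, rfl⟩; exact x.2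
  · rw [Set.disjoint_image_iff hinj, Set.disjoint_left]
    exact fun x hx hx' => hx'.1 hx
  · rintro _ ⟨u, hu, rfl⟩ v huv hvF
    have hv : v ∈ H.verts := huv.snd_mem
    by_cases hvX : (⟨v, hv⟩ : H.verts) ∈ X
    · exact Or.inl ⟨_, hvX, rfl⟩
    · refine Or.inr ⟨⟨v, hv⟩, ⟨hvX, u, hu, ?_⟩, rfl⟩
      rw [SimpleGraph.deleteEdges_adj]
      exact ⟨huv, fun hmem => hvF ⟨_, hmem, rfl⟩⟩
  · rwa [Set.ncard_image_of_injective _ hinj]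
  · rwa [Set.ncard_image_of_injective _ hinj]
  · rwa [Set.ncard_image_of_injective _ hinj,
      Set.ncard_image_of_injective _ (Sym2.map.injective hinj)]
  · rwa [Set.ncard_image_of_injective _ hinj, Set.ncard_image_of_injective _ hinj]

/-- The decomposition with both bounds expressed by the potential, for an arbitrary subgraph, by
induction on its order. -/
lemma decompose_aux [Finite V] {ε s t : ℝ} (hs : 0 ≤ s) (ht : 1 ≤ t) (hε : ε ≤ 1 / 48) (n : ℕ) :
    ∀ H : G.Subgraph, H.verts.ncard = n → ∃ Hs : List G.Subgraph,
      Hs.Pairwise (fun H K => Disjoint H.edgeSet K.edgeSet) ∧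
      (∀ K ∈ Hs, ESTExpander K.coe ε s t) ∧ (∀ K ∈ Hs, K.edgeSet ⊆ H.edgeSet) ∧
      ((H.edgeSet \ ⋃ K ∈ Hs, SimpleGraph.Subgraph.edgeSet K).ncard : ℝ) ≤
        s * (24 * (Real.logb 2 t + 1) ^ 2 * potential n) ∧
      (((Hs.map fun K => K.verts.ncard).sum : ℕ) : ℝ) ≤ potential n := by
  induction n using Nat.strong_induction_on with
  | _ n ih =>
  intro H hn
  have hpot : 0 ≤ potential n := (Nat.cast_nonneg n).trans (le_potential_nat n)
  by_cases hexp : ESTExpander H.coe ε s t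
  · refine ⟨[H], by simp, by simpa using hexp, by simp, ?_, ?_⟩
    · simp only [List.mem_singleton, Set.iUnion_iUnion_eq_left, sdiff_self]
      simp
      positivity
    · simpa [hn] using le_potential_nat n
  obtain ⟨X, N, F, hX, hdisj, hXN, h1, h2, h3, h4⟩ := exists_bad_of_not_expander H hexp
  rw [hn] at h2
  set H1 := touching H X N F hXN with hH1
  set H2 := avoiding H X F with hH2
  have hn1 : H1.verts.ncard = X.ncard + N.ncard := Set.ncard_union_eq hdisj
  have hn2' : H2.verts.ncard + X.ncard = n := by
    rw [← hn]; exact Set.ncard_sdiff_add_ncard_of_subset hX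
  have hn2 : ((H2.verts.ncard : ℕ) : ℝ) = n - X.ncard := by
    rw [← hn2']; push_cast; ring
  have ha : (1 : ℝ) ≤ X.ncard := by exact_mod_cast h1
  have hA := logb_two_nonneg ha
  have hm : (N.ncard : ℝ) ≤ 1 / 48 * ((X.ncard : ℝ) / (Real.logb 2 (X.ncard : ℝ) + 1) ^ 2) := by
    refine h4.le.trans ?_
    rw [mul_div_assoc]
    exact mul_le_mul_of_nonneg_right hε (by positivity)
  have hma : (N.ncard : ℝ) ≤ X.ncard / 48 := by
    have : (X.ncard : ℝ) / (Real.logb 2 (X.ncard : ℝ) + 1) ^ 2 ≤ X.ncard :=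
      div_le_self (by linarith) (by nlinarith)
    linarith
  have hc : (1 : ℝ) ≤ n - X.ncard := by
    rw [← hn2]
    have : 0 < H2.verts.ncard := by
      have : (0 : ℝ) < H2.verts.ncard := by rw [hn2]; linarith
      exact_mod_cast this
    exact_mod_cast this
  have hlt1 : H1.verts.ncard < n := by
    have : ((H1.verts.ncard : ℕ) : ℝ) < n := by rw [hn1]; push_cast; linarith
    exact_mod_cast this
  have hlt2 : H2.verts.ncard < n := by omega
  obtain ⟨L1, p1, e1, s1, c1, o1⟩ := ih _ hlt1 H1 rfl
  obtain ⟨L2, p2, e2, s2, c2, o2⟩ := ih _ hlt2 H2 rfl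
  have hsplit := potential_split ha (Nat.cast_nonneg N.ncard) hm h2 hc
  have hdrop := min_le_drop ha ht
  rw [← hn2, ← Nat.cast_add, ← hn1] at hsplit
  have h12 : Disjoint H1.edgeSet H2.edgeSet := by
    rw [Set.disjoint_left]
    intro e
    induction e using Sym2.ind with
    | _ u v =>
    intro (he1 : H1.Adj u v) (he2 : H2.Adj u v)
    exact he1.2.2.elim he2.2.2.1 he2.2.2.2
  have hsub1 : H1.edgeSet ⊆ H.edgeSet := by
    intro e
    induction e using Sym2.ind with
    | _ u v => exact fun (he : H1.Adj u v) => he.1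
  have hsub2 : H2.edgeSet ⊆ H.edgeSet := by
    intro e
    induction e using Sym2.ind with
    | _ u v => exact fun (he : H2.Adj u v) => he.1
  have hcov : H.edgeSet ⊆ F ∪ (H1.edgeSet ∪ H2.edgeSet) := by
    intro e
    induction e using Sym2.ind with
    | _ u v =>
    intro (he : H.Adj u v)
    by_cases hF : s(u, v) ∈ F
    · exact Or.inl hF
    by_cases hux : u ∈ X ∨ v ∈ X
    · exact Or.inr (Or.inl (show H1.Adj u v from ⟨he, hF, hux⟩))
    · rw [not_or] at hux
      exact Or.inr (Or.inr (show H2.Adj u v from ⟨he, hF, hux⟩))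
  refine ⟨L1 ++ L2, ?_, ?_, ?_, ?_, ?_⟩
  · rw [List.pairwise_append]
    exact ⟨p1, p2, fun A hA B hB => h12.mono (s1 A hA) (s2 B hB)⟩
  · intro K hK
    exact (List.mem_append.1 hK).elim (e1 K) (e2 K)
  · intro K hK
    exact (List.mem_append.1 hK).elim (fun h => (s1 K h).trans hsub1)
      (fun h => (s2 K h).trans hsub2)
  · set U1 := ⋃ K ∈ L1, SimpleGraph.Subgraph.edgeSet K with hU1
    set U2 := ⋃ K ∈ L2, SimpleGraph.Subgraph.edgeSet K with hU2
    have hU : (⋃ K ∈ L1 ++ L2, SimpleGraph.Subgraph.edgeSet K) = U1 ∪ U2 := by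
      ext e
      simp only [hU1, hU2, Set.mem_iUnion, List.mem_append, Set.mem_union, exists_prop, or_and_right,
        exists_or]
    rw [hU]
    have hss : H.edgeSet \ (U1 ∪ U2) ⊆ F ∪ ((H1.edgeSet \ U1) ∪ (H2.edgeSet \ U2)) := by
      rintro e ⟨he, heU⟩
      rw [Set.mem_union, not_or] at heU
      rcases hcov he with h | h | h
      · exact Or.inl h
      · exact Or.inr (Or.inl ⟨h, heU.1⟩)
      · exact Or.inr (Or.inr ⟨h, heU.2⟩)
    have hcard : (H.edgeSet \ (U1 ∪ U2)).ncard
        ≤ F.ncard + ((H1.edgeSet \ U1).ncard + (H2.edgeSet \ U2).ncard) :=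
      (Set.ncard_le_ncard hss (Set.toFinite _)).trans
        ((Set.ncard_union_le _ _).trans (Nat.add_le_add_left (Set.ncard_union_le _ _) _))
    have hcard' : ((H.edgeSet \ (U1 ∪ U2)).ncard : ℝ)
        ≤ F.ncard + ((H1.edgeSet \ U1).ncard + (H2.edgeSet \ U2).ncard) := by
      exact_mod_cast hcard
    have hT : 0 ≤ 24 * (Real.logb 2 t + 1) ^ 2 := by positivity
    have hpay := mul_le_mul_of_nonneg_left
      (mul_le_mul_of_nonneg_left hsplit hT) hs
    have hpay2 := mul_le_mul_of_nonneg_left hdrop hs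
    linarith
  · rw [List.map_append, List.sum_append, Nat.cast_add]
    have : 0 ≤ 1 / 4 * ((X.ncard : ℝ) / (Real.logb 2 (X.ncard : ℝ) + 1) ^ 2) := by positivity
    linarith

end Split

/-- Decomposition into expanders: for `s ≥ 0`, `t ≥ 1` and `0 < ε ≤ 1/48`, every graph
`G` on `n` vertices has a collection `ℋ` of pairwise edge-disjoint `(ε, s, t)`-expander
subgraphs covering all but at most `48 s n (log t + 1)²` edges, with total order at
most `2n`. -/
theorem decompose_into_expanders (V : Type) [Fintype V] (G : SimpleGraph V)
    (ε s t : ℝ) (hs : 0 ≤ s) (ht : 1 ≤ t) (hε0 : 0 < ε) (hε : ε ≤ 1/48) :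
    ∃ Hs : List G.Subgraph,
      Hs.Pairwise (fun H K => Disjoint H.edgeSet K.edgeSet) ∧
      (∀ H ∈ Hs, ESTExpander H.coe ε s t) ∧
      (((G.edgeSet \ ⋃ H ∈ Hs, SimpleGraph.Subgraph.edgeSet H).ncard : ℝ) ≤
        48 * s * (Fintype.card V : ℝ) * (Real.logb 2 t + 1)^2) ∧
      (Hs.map fun H => H.verts.ncard).sum ≤ 2 * Fintype.card V := by
  obtain ⟨Hs, hp, he, -, hc, ho⟩ := decompose_aux hs ht hε (Fintype.card V) (⊤ : G.Subgraph)
    (by rw [SimpleGraph.Subgraph.verts_top, Set.ncard_univ, Nat.card_eq_fintype_card])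
  have hle := potential_nat_le (Fintype.card V)
  refine ⟨Hs, hp, he, ?_, ?_⟩
  · rw [SimpleGraph.Subgraph.edgeSet_top] at hc
    have hT : 0 ≤ s * (24 * (Real.logb 2 t + 1) ^ 2) := by positivity
    have := mul_le_mul_of_nonneg_left hle hT
    linarith
  · have := ho.trans hle
    exact_mod_cast this
end

section
/- For every ε > 0 there exists k₀ = k₀(ε) such that the following holds for every k ≥ k₀. Suppose G is an n-vertex ε-expander, and let A and X be disjoint subsets of V(G) with |A| ≥ k³ such that A has k-limited contact with X in G. Then |B^i_{G−X}(A)| > min{2^{i^{1/4}}, n/2} for every integer i ≥ 1. -/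
/-- `ballIn G W X i` is the ball `B^i_{G[W]}(X ∩ W)` of radius `i` around `X ∩ W` in
the subgraph of `G` induced on `W`, viewed as a subset of `V`. In particular
`ballIn G Xᶜ A i = B^i_{G−X}(A)` when `A` is disjoint from `X`. -/
def ballIn {V : Type*} (G : SimpleGraph V) (W X : Set V) (i : ℕ) : Set V :=
  {v | ∃ u ∈ X ∩ W, ∃ w : G.Walk u v, w.length ≤ i ∧ ∀ x ∈ w.support, x ∈ W}

/-- A graph `G` on `n` vertices is an `ε`-expander if `|N_G(X)| ≥ ε|X|/(log|X|+1)²`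
for every `X` with `1 ≤ |X| ≤ 2n/3`. -/
def EpsExpander {V : Type*} (G : SimpleGraph V) (ε : ℝ) : Prop :=
  ∀ X : Set V, 1 ≤ X.ncard → (X.ncard : ℝ) ≤ 2 * (Nat.card V : ℝ) / 3 →
    ε * (X.ncard : ℝ) / (Real.logb 2 (X.ncard : ℝ) + 1)^2 ≤ ((extNbhd G X).ncard : ℝ)

/-- `A` has `k`-limited contact with `X` in `G`:
`|N_G(B^{i−1}_{G−X}(A)) ∩ X| ≤ k·i` for every integer `i ≥ 1`. -/
def LimitedContact {V : Type*} (G : SimpleGraph V) (A X : Set V) (k : ℝ) : Prop :=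
  ∀ i : ℕ, 1 ≤ i →
    (((extNbhd G (ballIn G Xᶜ A (i - 1))) ∩ X).ncard : ℝ) ≤ k * (i : ℝ)

lemma ballIn_mono {V : Type*} (G : SimpleGraph V) (W A : Set V) {i j : ℕ} (h : i ≤ j) :
    ballIn G W A i ⊆ ballIn G W A j := by
  rintro v ⟨u, hu, w, hw, hs⟩
  exact ⟨u, hu, w, hw.trans h, hs⟩

lemma subset_ballIn {V : Type*} (G : SimpleGraph V) {A X : Set V} (h : Disjoint A X) (i : ℕ) :
    A ⊆ ballIn G Xᶜ A i := by
  intro v hv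
  have hX : v ∈ Xᶜ := fun hx => Set.disjoint_left.1 h hv hx
  exact ⟨v, ⟨hv, hX⟩, .nil, by simp, by simpa using hX⟩

lemma extNbhd_ballIn_subset {V : Type*} (G : SimpleGraph V) (A X : Set V) (i : ℕ) :
    extNbhd G (ballIn G Xᶜ A i) \ X ⊆ ballIn G Xᶜ A (i + 1) \ ballIn G Xᶜ A i := by
  rintro v ⟨⟨hv, u, ⟨a, ha, w, hw, hs⟩, huv⟩, hX⟩
  refine ⟨⟨a, ha, w.concat huv, by simpa using hw, ?_⟩, hv⟩
  intro x hx
  rw [SimpleGraph.Walk.support_concat] at hx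
  simp only [List.mem_append, List.mem_singleton] at hx
  rcases hx with hx | rfl
  · exact hs x hx
  · exact hX

/-- A ball together with its exterior neighbourhood is covered by the next ball and the vertices
of `X` it touches. -/
lemma card_ballIn_step {V : Type*} [Finite V] (G : SimpleGraph V) (A X : Set V) (i : ℕ) :
    (ballIn G Xᶜ A i).ncard + (extNbhd G (ballIn G Xᶜ A i)).ncard ≤
      (ballIn G Xᶜ A (i + 1)).ncard + (extNbhd G (ballIn G Xᶜ A i) ∩ X).ncard := by
  have h1 := Set.ncard_inter_add_ncard_sdiff_eq_ncard (extNbhd G (ballIn G Xᶜ A i)) X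
  have h2 := Set.ncard_le_ncard (extNbhd_ballIn_subset G A X i)
  have h3 := Set.ncard_sdiff_add_ncard_of_subset (ballIn_mono G Xᶜ A (Nat.le_succ i))
  simp only [Nat.succ_eq_add_one] at h3
  omega

/-- The three numerical facts about `L = log₂ b` that the growth step needs; they hold as soon as
`b` is large in terms of `ε`. -/
lemma eventually_large (ε : ℝ) (hε : 0 < ε) :
    ∀ᶠ b : ℝ in Filter.atTop, 1 ≤ Real.logb 2 b ∧
      ε / (2 * (Real.logb 2 b + 1) ^ 2) ≤ 1 ∧
      1 ≤ 4 * (Real.logb 2 b) ^ 3 * (ε / (2 * (Real.logb 2 b + 1) ^ 2)) ∧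
      2 * ((Real.logb 2 b) ^ 4 + 1) * (Real.logb 2 b + 1) ^ 2 ≤
        ε * ((2 : ℝ) ^ (Real.logb 2 b / 3)) ^ 2 := by
  suffices h : ∀ᶠ L : ℝ in Filter.atTop, 1 ≤ L ∧ ε / (2 * (L + 1) ^ 2) ≤ 1 ∧
      1 ≤ 4 * L ^ 3 * (ε / (2 * (L + 1) ^ 2)) ∧
      2 * (L ^ 4 + 1) * (L + 1) ^ 2 ≤ ε * ((2 : ℝ) ^ (L / 3)) ^ 2 from
    (Real.tendsto_logb_atTop (by norm_num)).eventually h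
  have hl : 0 < Real.log 2 * (2 / 3) := mul_pos (Real.log_pos (by norm_num)) (by norm_num)
  have ho := (isLittleO_pow_exp_pos_mul_atTop (k := 6) hl).bound (c := ε / 16) (by positivity)
  filter_upwards [ho, Filter.eventually_ge_atTop 1, Filter.eventually_ge_atTop ε,
    Filter.eventually_ge_atTop (2 / ε)] with L h1 h2 h3 h4
  have h4' : 2 ≤ ε * L := by rw [div_le_iff₀ hε] at h4; linarith
  have hsq : (L + 1) ^ 2 ≤ 4 * L ^ 2 := by nlinarith
  refine ⟨h2, ?_, ?_, ?_⟩
  · rw [div_le_one (by positivity)]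
    nlinarith
  · rw [← mul_div_assoc, le_div_iff₀ (by positivity)]
    nlinarith [mul_le_mul_of_nonneg_left h4' (sq_nonneg L)]
  · have e : ((2 : ℝ) ^ (L / 3)) ^ 2 = Real.exp (Real.log 2 * (2 / 3) * L) := by
      rw [Real.rpow_def_of_pos (by norm_num), ← Real.exp_nat_mul]
      congr 1
      push_cast
      ring
    rw [Real.norm_of_nonneg (by positivity), Real.norm_of_nonneg (by positivity), ← e] at h1
    have h5 : L ^ 4 + 1 ≤ 2 * L ^ 4 := by linarith [one_le_pow₀ h2 (n := 4)]
    calc 2 * (L ^ 4 + 1) * (L + 1) ^ 2 ≤ 2 * (2 * L ^ 4) * (4 * L ^ 2) := by gcongr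
      _ = 16 * L ^ 6 := by ring
      _ ≤ _ := by linarith

lemma le_logb_two_one_add {x : ℝ} (h0 : 0 ≤ x) (h1 : x ≤ 1) : x ≤ Real.logb 2 (1 + x) := by
  rw [Real.le_logb_iff_rpow_le (by norm_num) (by linarith)]
  have := rpow_one_add_le_one_add_mul_self (s := 1) (by norm_num) h0 h1
  norm_num at this
  linarith

/-- One step of the growth: `b` and `b'` are the sizes of the balls of radius `i` and `i + 1`. -/
lemma growth_step {ε k b b' i : ℝ} (hε : 0 < ε) (hk : 0 ≤ k) (hb : 0 < b) (hkb : k ^ 3 ≤ b)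
    (hL : 1 ≤ Real.logb 2 b)
    (h1 : ε / (2 * (Real.logb 2 b + 1) ^ 2) ≤ 1)
    (h2 : 1 ≤ 4 * (Real.logb 2 b) ^ 3 * (ε / (2 * (Real.logb 2 b + 1) ^ 2)))
    (h3 : 2 * ((Real.logb 2 b) ^ 4 + 1) * (Real.logb 2 b + 1) ^ 2 ≤
      ε * ((2 : ℝ) ^ (Real.logb 2 b / 3)) ^ 2)
    (hi : i < (Real.logb 2 b) ^ 4)
    (hb' : b + ε * b / (Real.logb 2 b + 1) ^ 2 - k * (i + 1) ≤ b') :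
    i + 1 < (Real.logb 2 b') ^ 4 := by
  set L := Real.logb 2 b with hLdef
  set t := (2 : ℝ) ^ (L / 3) with ht
  have htpos : 0 < t := by positivity
  have htb : t ^ 3 = b := by
    rw [ht, ← Real.rpow_natCast, ← Real.rpow_mul (by norm_num)]
    rw [show L / 3 * ((3 : ℕ) : ℝ) = L by push_cast; ring]
    exact Real.rpow_logb (by norm_num) (by norm_num) hb
  have hkt : k ≤ t := le_of_pow_le_pow_left₀ (n := 3) (by norm_num) htpos.le (by rw [htb]; exact hkb)
  set x := ε / (2 * (L + 1) ^ 2) with hx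
  have hx0 : 0 < x := by positivity
  have hcontact : k * (i + 1) ≤ b * x := by
    have h4 : L ^ 4 + 1 ≤ t ^ 2 * x := by
      rw [hx, ← mul_div_assoc, le_div_iff₀ (by positivity)]
      linarith
    calc k * (i + 1) ≤ k * (L ^ 4 + 1) := by gcongr
      _ ≤ t * (L ^ 4 + 1) := by gcongr
      _ ≤ t * (t ^ 2 * x) := by gcongr
      _ = b * x := by rw [← htb]; ring
  have hexp : ε * b / (L + 1) ^ 2 = 2 * (b * x) := by
    rw [hx]
    field_simp
  have hgrow : b * (1 + x) ≤ b' := by linarith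
  have hlog : L + x ≤ Real.logb 2 b' := by
    calc L + x ≤ L + Real.logb 2 (1 + x) := by linarith [le_logb_two_one_add hx0.le h1]
      _ = Real.logb 2 (b * (1 + x)) := by
        rw [Real.logb_mul hb.ne' (by positivity)]
      _ ≤ _ := Real.logb_le_logb_of_le (by norm_num) (by positivity) hgrow
  have hpow : L ^ 4 + 4 * L ^ 3 * x ≤ (L + x) ^ 4 := by
    have : (L + x) ^ 4 = L ^ 4 + 4 * L ^ 3 * x + (6 * L ^ 2 * x ^ 2 + 4 * L * x ^ 3 + x ^ 4) := by
      ring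
    have : 0 ≤ 6 * L ^ 2 * x ^ 2 + 4 * L * x ^ 3 + x ^ 4 := by positivity
    linarith
  have : (L + x) ^ 4 ≤ (Real.logb 2 b') ^ 4 := by gcongr
  linarith

/-- Expansion with a forbidden set: for every `ε > 0` there is `k₀` such that for all
`k ≥ k₀`, every `n`-vertex `ε`-expander `G` and disjoint sets `A, X` with `|A| ≥ k³`
and `A` having `k`-limited contact with `X` satisfy
`|B^i_{G−X}(A)| > min{2^(i^{1/4}), n/2}` for every integer `i ≥ 1`. -/
theorem expand_with_limited_contact (ε : ℝ) (hε : 0 < ε) :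
    ∃ k₀ : ℝ, ∀ k : ℝ, k₀ ≤ k →
      ∀ (V : Type) [Fintype V] (G : SimpleGraph V), EpsExpander G ε →
      ∀ A X : Set V, Disjoint A X → k^3 ≤ (A.ncard : ℝ) →
        LimitedContact G A X k →
        ∀ i : ℕ, 1 ≤ i →
          min ((2 : ℝ) ^ ((i : ℝ) ^ ((1 : ℝ)/4))) ((Fintype.card V : ℝ) / 2) <
            ((ballIn G Xᶜ A i).ncard : ℝ) := by
  obtain ⟨b₀, hb₀⟩ := Filter.eventually_atTop.1 (eventually_large ε hε)
  refine ⟨max b₀ 1, fun k hk V _ G hG A X hAX hA hC i _ => ?_⟩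
  have hk1 : 1 ≤ k := (le_max_right _ _).trans hk
  have hkb₀ : b₀ ≤ k ^ 3 := ((le_max_left _ _).trans hk).trans (le_self_pow₀ hk1 (by norm_num))
  have hge : ∀ j, k ^ 3 ≤ ((ballIn G Xᶜ A j).ncard : ℝ) := fun j =>
    hA.trans (by exact_mod_cast Set.ncard_le_ncard (subset_ballIn G hAX j))
  have hk3 : 1 ≤ k ^ 3 := one_le_pow₀ hk1
  have hinv : ∀ j : ℕ, ((ballIn G Xᶜ A j).ncard : ℝ) ≤ (Fintype.card V : ℝ) / 2 →
      (j : ℝ) < (Real.logb 2 ((ballIn G Xᶜ A j).ncard : ℝ)) ^ 4 := by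
    intro j
    induction j with
    | zero =>
      intro _
      have := (hb₀ _ (hkb₀.trans (hge 0))).1
      rw [Nat.cast_zero]
      positivity
    | succ j ih =>
      intro hj
      have hmono : ((ballIn G Xᶜ A j).ncard : ℝ) ≤ ((ballIn G Xᶜ A (j + 1)).ncard : ℝ) := by
        exact_mod_cast Set.ncard_le_ncard (ballIn_mono G Xᶜ A (Nat.le_succ j))
      have hhalf := hmono.trans hj
      obtain ⟨hL, h1, h2, h3⟩ := hb₀ _ (hkb₀.trans (hge j))
      have hpos : (1 : ℝ) ≤ ((ballIn G Xᶜ A j).ncard : ℝ) := hk3.trans (hge j)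
      have hexp := hG (ballIn G Xᶜ A j) (by exact_mod_cast hpos) (by
        rw [Nat.card_eq_fintype_card]
        linarith)
      have hcon := hC (j + 1) (by omega)
      rw [Nat.add_sub_cancel] at hcon
      push_cast at hcon ⊢
      have hstep : ((ballIn G Xᶜ A j).ncard : ℝ) + ((extNbhd G (ballIn G Xᶜ A j)).ncard : ℝ) ≤
          ((ballIn G Xᶜ A (j + 1)).ncard : ℝ) +
            ((extNbhd G (ballIn G Xᶜ A j) ∩ X).ncard : ℝ) := by
        exact_mod_cast card_ballIn_step G A X j
      exact growth_step hε (by linarith) (by linarith) (hge j) hL h1 h2 h3 (ih hhalf)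
        (by linarith)
  by_cases h : ((ballIn G Xᶜ A i).ncard : ℝ) ≤ (Fintype.card V : ℝ) / 2
  · refine min_lt_of_left_lt ?_
    have hi := hinv i h
    have hL := (hb₀ _ (hkb₀.trans (hge i))).1
    have hpos : (0 : ℝ) < ((ballIn G Xᶜ A i).ncard : ℝ) := by linarith [hge i]
    rw [← Real.lt_logb_iff_rpow_lt (by norm_num) hpos]
    refine lt_of_pow_lt_pow_left₀ 4 (by linarith) ?_
    rw [← Real.rpow_natCast, ← Real.rpow_mul (by positivity)]
    norm_num
    exact hi
  · exact min_lt_of_right_lt (not_le.1 h)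
end
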